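/- arXiv:1409.2449 — 2 statements merged into one kernel-verified Lean document; each statement's English description precedes it below -/
import Mathlib

section
/- Let γ¹, ..., γⁿ be odd elements of the Clifford algebra Cl(p,q) of even dimension n satisfying γᵃγᵇ + γᵇγᵃ = 2ηᵃᵇ. Then γ¹γ²⋯γⁿ = ± e¹e²⋯eⁿ. -/
open CliffordAlgebra

/-- The quadratic form of signature (p,q) on ℝⁿ, n = p + q. -/
noncomputable def Qpq (p q : ℕ) : QuadraticForm ℝ (Fin (p + q) → ℝ) :=
  QuadraticMap.weightedSumSquares ℝ (fun i => if (i : ℕ) < p then (1 : ℝ) else -1)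

/-- The generators e¹, ..., eⁿ of the Clifford algebra Cl(p,q). -/
noncomputable def gen (p q : ℕ) (a : Fin (p + q)) : CliffordAlgebra (Qpq p q) :=
  ι (Qpq p q) (Pi.single a 1)

/-- The volume element e¹e²⋯eⁿ of Cl(p,q). -/
noncomputable def vol (p q : ℕ) : CliffordAlgebra (Qpq p q) :=
  ((List.finRange (p + q)).map (gen p q)).prod

/-- The diagonal matrix η = diag(1,...,1,−1,...,−1) with p pluses and q minuses. -/
def eta (p q : ℕ) (a b : Fin (p + q)) : ℝ :=
  if a = b then (if (a : ℕ) < p then 1 else -1) else 0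

section Aux

set_option linter.unusedSectionVars false

variable {n : ℕ} {A : Type*} [Ring A] [Algebra ℝ A]

lemma aux_sign (e : Fin n → A) (hac : ∀ i j, i ≠ j → e i * e j = -(e j * e i))
    (j : Fin n) (l : List (Fin n)) :
    e j * (l.map e).prod = ((-1 : ℤ) ^ (l.length + l.count j)) • ((l.map e).prod * e j) := by
  induction l with
  | nil => simp
  | cons i t ih =>
    by_cases h : i = j
    · subst h
      rw [List.map_cons, List.prod_cons, mul_assoc, ih, mul_smul_comm,
        List.length_cons, List.count_cons_self]
      congr 1
      ring
    · rw [List.map_cons, List.prod_cons, ← mul_assoc, hac j i (Ne.symm h), neg_mul, mul_assoc, ih,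
        List.length_cons, List.count_cons_of_ne h, mul_smul_comm, mul_assoc, ← neg_smul]
      congr 1
      ring

lemma aux_perm (e : Fin n → A) (hac : ∀ i j, i ≠ j → e i * e j = -(e j * e i))
    {l l' : List (Fin n)} (h : l.Perm l') :
    (l.map e).prod = (l'.map e).prod ∨ (l.map e).prod = -(l'.map e).prod := by
  induction h with
  | nil => simp
  | cons x _ ih =>
    rcases ih with ih | ih <;> simp [ih]
  | swap x y l =>
    by_cases hxy : x = y
    · subst hxy; simp
    · right
      simp only [List.map_cons, List.prod_cons, ← mul_assoc]
      rw [hac y x (Ne.symm hxy), neg_mul]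
  | trans _ _ h1 h2 =>
    rcases h1 with h1 | h1 <;> rcases h2 with h2 | h2 <;> simp [h1, h2]

lemma aux_even (e : Fin n → A) (hac : ∀ i j, i ≠ j → e i * e j = -(e j * e i))
    (hsq : ∀ i, e i * e i = 1 ∨ e i * e i = -1) (k : ℕ) :
    ∀ l : List (Fin n), l.length = k → (∀ j, Even (l.count j)) →
      (l.map e).prod = 1 ∨ (l.map e).prod = -1 := by
  induction k using Nat.strong_induction_on with
  | _ k ih =>
    intro l hl hc
    match l, hl, hc with
    | [], _, _ => simp
    | i :: t, hl, hc =>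
      have hi : i ∈ t := by
        have := hc i
        rw [List.count_cons_self] at this
        rw [← List.count_pos_iff]
        by_contra h0
        have h0 : t.count i = 0 := by omega
        rw [h0] at this
        exact absurd this (by decide)
      have hp : (i :: t).Perm (i :: i :: t.erase i) := (List.perm_cons_erase hi).cons i
      have hlen := hp.length_eq
      simp only [List.length_cons] at hlen hl
      have := ih (t.erase i).length (by omega) (t.erase i) rfl (by
        intro j
        have h1 := hc j
        rw [hp.count_eq] at h1
        by_cases hj : i = j
        · subst hj
          simp only [List.count_cons_self] at h1
          grind
        · rwa [List.count_cons_of_ne hj, List.count_cons_of_ne hj] at h1)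
      have h2 := aux_perm e hac hp
      simp only [List.map_cons, List.prod_cons] at h2 ⊢
      rw [← mul_assoc (e i) (e i)] at h2
      rcases this with h | h <;> rcases h2 with h2 | h2 <;> rcases hsq i with h3 | h3 <;>
        rw [h2, h, h3] <;> simp

lemma aux_unit (e : Fin n → A) (hsq : ∀ i, e i * e i = 1 ∨ e i * e i = -1) (i : Fin n) :
    IsUnit (e i) := by
  rcases hsq i with h | h
  · exact ⟨⟨e i, e i, h, h⟩, rfl⟩
  · exact ⟨⟨e i, -e i, by simp [h], by simp [h]⟩, rfl⟩

lemma aux_unit_prod (e : Fin n → A) (hsq : ∀ i, e i * e i = 1 ∨ e i * e i = -1)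
    (l : List (Fin n)) : IsUnit (l.map e).prod := by
  induction l with
  | nil => simp
  | cons i t ih => simpa using (aux_unit e hsq i).mul ih

lemma aux_neg_self {x : A} (h : x = -x) : x = 0 := by
  have h2 : (2 : ℝ) • x = 0 := by
    rw [two_smul]; nth_rewrite 1 [h]; simp
  simpa using h2

lemma aux_comm_scalar [Nontrivial A] (hn : Even n) (e : Fin n → A)
    (hac : ∀ i j, i ≠ j → e i * e j = -(e j * e i))
    (hsq : ∀ i, e i * e i = 1 ∨ e i * e i = -1) (l : List (Fin n))
    (hl : ∀ j, e j * (l.map e).prod = (l.map e).prod * e j) :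
    (l.map e).prod = 1 ∨ (l.map e).prod = -1 := by
  have key : ∀ j, Even (l.length + l.count j) := by
    intro j
    by_contra h
    rw [Nat.not_even_iff_odd] at h
    have h1 := aux_sign e hac j l
    rw [h.neg_one_pow, hl j, neg_one_smul] at h1
    exact ((aux_unit_prod e hsq l).mul (aux_unit e hsq j)).ne_zero (aux_neg_self h1)
  have hs : Even (∑ j : Fin n, (l.length + l.count j)) :=
    Finset.even_sum _ fun j _ => key j
  have hc : ∑ j : Fin n, l.count j = l.length := by
    have := Multiset.sum_count_eq_card (s := Finset.univ) (m := (l : Multiset (Fin n)))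
      (fun a _ => Finset.mem_univ a)
    simpa using this
  rw [Finset.sum_add_distrib, hc] at hs
  simp only [Finset.sum_const, Finset.card_univ, Fintype.card_fin, smul_eq_mul] at hs
  have hle : Even l.length := by
    rw [Nat.even_add, Nat.even_mul] at hs
    tauto
  refine aux_even e hac hsq l.length l rfl fun j => ?_
  have := key j
  rw [Nat.even_add] at this
  tauto

lemma aux_center_span (e : Fin n → A)
    (hac : ∀ i j, i ≠ j → e i * e j = -(e j * e i))
    (hsq : ∀ i, e i * e i = 1 ∨ e i * e i = -1)
    (hspan : ∀ x : A, x ∈ Submodule.span ℝ (Set.range fun l : List (Fin n) => (l.map e).prod))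
    (x : A) (hx : ∀ j, e j * x = x * e j) (L : List (Fin n)) :
    x ∈ Submodule.span ℝ {m : A | ∃ l : List (Fin n), m = (l.map e).prod ∧
      ∀ j ∈ L, e j * m = m * e j} := by
  induction L with
  | nil =>
    refine Submodule.span_mono ?_ (hspan x)
    rintro _ ⟨l, rfl⟩
    exact ⟨l, rfl, by simp⟩
  | cons i L ih =>
    obtain ⟨s, hs⟩ : ∃ s : ℝ, s • (e i * e i) = 1 := by
      rcases hsq i with h | h
      · exact ⟨1, by simp [h]⟩
      · exact ⟨-1, by simp [h]⟩
    let T : A →ₗ[ℝ] A := (1 / 2 : ℝ) • (LinearMap.id +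
      s • (LinearMap.mulLeft ℝ (e i) ∘ₗ LinearMap.mulRight ℝ (e i)))
    have hT : ∀ y, T y = (1 / 2 : ℝ) • (y + s • (e i * (y * e i))) := fun y => rfl
    have hTc : ∀ y, e i * y = y * e i → T y = y := by
      intro y hy
      rw [hT, ← hy, ← mul_assoc, ← smul_mul_assoc, hs, one_mul, ← two_smul ℝ y, smul_smul]
      norm_num
    have hTa : ∀ y, e i * y = -(y * e i) → T y = 0 := by
      intro y hy
      have : y * e i = -(e i * y) := by rw [hy, neg_neg]
      rw [hT, this, mul_neg, ← mul_assoc, smul_neg, ← smul_mul_assoc, hs, one_mul]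
      simp
    rw [← hTc x (hx i)]
    have := Submodule.mem_map_of_mem (f := T) ih
    rw [Submodule.map_span] at this
    refine Submodule.span_le.2 ?_ this
    rintro _ ⟨_, ⟨l, rfl, hl⟩, rfl⟩
    have h1 := aux_sign e hac i l
    rcases Nat.even_or_odd (l.length + l.count i) with h | h
    · rw [h.neg_one_pow, one_smul] at h1
      rw [hTc _ h1]
      refine Submodule.subset_span ⟨l, rfl, ?_⟩
      intro j hj
      rcases List.mem_cons.1 hj with rfl | hj
      · exact h1
      · exact hl j hj
    · rw [h.neg_one_pow, neg_one_smul] at h1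
      rw [hTa _ h1]
      exact Submodule.zero_mem _

lemma aux_center [Nontrivial A] (hn : Even n) (e : Fin n → A)
    (hac : ∀ i j, i ≠ j → e i * e j = -(e j * e i))
    (hsq : ∀ i, e i * e i = 1 ∨ e i * e i = -1)
    (hspan : ∀ x : A, x ∈ Submodule.span ℝ (Set.range fun l : List (Fin n) => (l.map e).prod))
    (x : A) (hx : ∀ j, e j * x = x * e j) : ∃ r : ℝ, x = r • 1 := by
  have h := aux_center_span e hac hsq hspan x hx (List.finRange n)
  have h2 : x ∈ Submodule.span ℝ {(1 : A)} := by
    refine Submodule.span_le.2 ?_ h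
    rintro _ ⟨l, rfl, hl⟩
    rcases aux_comm_scalar hn e hac hsq l (fun j => hl j (List.mem_finRange j)) with h | h
    · rw [h]; exact Submodule.subset_span rfl
    · rw [h]; exact Submodule.neg_mem _ (Submodule.subset_span rfl)
  obtain ⟨r, hr⟩ := Submodule.mem_span_singleton.1 h2
  exact ⟨r, hr.symm⟩

lemma aux_vol (hn : Even n) (e : Fin n → A)
    (hac : ∀ i j, i ≠ j → e i * e j = -(e j * e i)) (j : Fin n) :
    e j * ((List.finRange n).map e).prod = -(((List.finRange n).map e).prod * e j) := by
  rw [aux_sign e hac j]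
  have : (List.finRange n).count j = 1 :=
    List.count_eq_one_of_mem (List.nodup_finRange n) (List.mem_finRange j)
  rw [this, List.length_finRange, (hn.add_one).neg_one_pow, neg_one_smul]

lemma aux_vol_sq (e : Fin n → A)
    (hac : ∀ i j, i ≠ j → e i * e j = -(e j * e i))
    (hsq : ∀ i, e i * e i = 1 ∨ e i * e i = -1) :
    ((List.finRange n).map e).prod * ((List.finRange n).map e).prod = 1 ∨
    ((List.finRange n).map e).prod * ((List.finRange n).map e).prod = -1 := by
  rw [← List.prod_append, ← List.map_append]
  refine aux_even e hac hsq _ _ rfl fun j => ?_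
  rw [List.count_append]
  exact ⟨_, rfl⟩

lemma aux_simple (hn : Even n) (e : Fin n → A)
    (hac : ∀ i j, i ≠ j → e i * e j = -(e j * e i))
    (hsq : ∀ i, e i * e i = 1 ∨ e i * e i = -1)
    {B : Type*} [Ring B] [Algebra ℝ B] (φ : A →ₐ[ℝ] B)
    (x : A) (hx0 : x ≠ 0) (hx : φ x = 0) (L : List (Fin n)) :
    ∃ y : A, y ≠ 0 ∧ φ y = 0 ∧ ∀ j ∈ L, e j * y = y * e j := by
  induction L with
  | nil => exact ⟨x, hx0, hx, by simp⟩
  | cons i L ih =>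
    obtain ⟨y, hy0, hy, hc⟩ := ih
    obtain ⟨s, hs⟩ : ∃ s : ℝ, s • (e i * e i) = 1 := by
      rcases hsq i with h | h
      · exact ⟨1, by simp [h]⟩
      · exact ⟨-1, by simp [h]⟩
    by_cases hz : y + s • (e i * y * e i) = 0
    · -- y anticommutes with e i
      have hanti : e i * y = -(y * e i) := by
        have h1 : e i * (y + s • (e i * y * e i)) = e i * y + y * e i := by
          rw [mul_add, mul_smul_comm, ← mul_assoc, ← mul_assoc, ← smul_mul_assoc,
            ← smul_mul_assoc, hs, one_mul]
        rw [hz, mul_zero] at h1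
        exact eq_neg_of_add_eq_zero_left h1.symm
      set w := ((List.finRange n).map e).prod with hw
      have hwu : IsUnit w := aux_unit_prod e hsq _
      refine ⟨w * e i * y, ?_, by simp [hy], ?_⟩
      · intro h0
        exact hy0 ((hwu.mul (aux_unit e hsq i)).mul_right_eq_zero.1 h0)
      · intro j hj
        have hv := aux_vol hn e hac j
        rw [← hw] at hv
        by_cases hji : j = i
        · subst hji
          calc e j * (w * e j * y) = (e j * w) * (e j * y) := by noncomm_ring
            _ = w * e j * (y * e j) := by rw [hv, hanti]; noncomm_ring
            _ = _ := by noncomm_ring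
        · have hjL : j ∈ L := by
            rcases List.mem_cons.1 hj with h | h
            · exact absurd h hji
            · exact h
          calc e j * (w * e i * y) = (e j * w) * (e i * y) := by noncomm_ring
            _ = -(w * (e j * e i) * y) := by rw [hv]; noncomm_ring
            _ = w * e i * (e j * y) := by rw [hac j i hji]; noncomm_ring
            _ = _ := by rw [hc j hjL]; noncomm_ring
    · refine ⟨_, hz, by simp [hy], ?_⟩
      intro j hj
      by_cases hji : j = i
      · subst hji
        rw [mul_add, add_mul, mul_smul_comm, smul_mul_assoc]
        have h1 : s • (e j * (e j * y * e j)) = y * e j := by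
          rw [← mul_assoc, ← mul_assoc, ← smul_mul_assoc, ← smul_mul_assoc, hs, one_mul]
        have h2 : s • (e j * y * e j * e j) = e j * y := by
          rw [mul_assoc (e j * y), ← mul_smul_comm, hs, mul_one]
        rw [h1, h2, add_comm]
      · have hjL : j ∈ L := by
          rcases List.mem_cons.1 hj with h | h
          · exact absurd h hji
          · exact h
        rw [mul_add, add_mul, mul_smul_comm, smul_mul_assoc, hc j hjL]
        congr 2
        calc e j * (e i * y * e i) = (e j * e i) * y * e i := by noncomm_ring
          _ = -(e i * (e j * y) * e i) := by rw [hac j i hji]; noncomm_ring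
          _ = -(e i * y * (e j * e i)) := by rw [hc j hjL]; noncomm_ring
          _ = _ := by rw [hac j i hji]; noncomm_ring

lemma aux_inj [Nontrivial A] (hn : Even n) (e : Fin n → A)
    (hac : ∀ i j, i ≠ j → e i * e j = -(e j * e i))
    (hsq : ∀ i, e i * e i = 1 ∨ e i * e i = -1)
    (hspan : ∀ x : A, x ∈ Submodule.span ℝ (Set.range fun l : List (Fin n) => (l.map e).prod))
    {B : Type*} [Ring B] [Algebra ℝ B] [Nontrivial B] (φ : A →ₐ[ℝ] B) :
    Function.Injective φ := by
  rw [injective_iff_map_eq_zero]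
  intro x hx
  by_contra hx0
  obtain ⟨y, hy0, hy, hc⟩ := aux_simple hn e hac hsq φ x hx0 hx (List.finRange n)
  obtain ⟨r, rfl⟩ := aux_center hn e hac hsq hspan y (fun j => hc j (List.mem_finRange j))
  rw [map_smul, map_one] at hy
  rcases smul_eq_zero.1 hy with h | h
  · exact hy0 (by simp [h])
  · exact one_ne_zero h

end Aux

lemma gen_decomp (p q : ℕ) (v : Fin (p + q) → ℝ) :
    ι (Qpq p q) v = ∑ i, v i • gen p q i := by
  conv_lhs => rw [pi_eq_sum_univ' v]
  simp only [gen, map_sum, map_smul]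

lemma gen_rel (p q : ℕ) (a b : Fin (p + q)) :
    gen p q a * gen p q b + gen p q b * gen p q a =
      algebraMap ℝ (CliffordAlgebra (Qpq p q)) (2 * eta p q a b) := by
  rw [gen, gen, ι_mul_ι_add_swap]
  congr 1
  simp only [QuadraticMap.polar, Qpq, QuadraticMap.weightedSumSquares_apply, eta, Pi.add_apply,
    ← Finset.sum_sub_distrib]
  by_cases h : a = b
  · subst h
    rw [Finset.sum_eq_single a]
    · simp; split_ifs <;> norm_num
    · intro j _ hj; simp [hj]
    · simp
  · rw [if_neg h]
    simp only [mul_zero]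
    refine Finset.sum_eq_zero fun j _ => ?_
    by_cases h1 : j = a
    · subst h1; simp [h]
    · simp [h1]

lemma rel_ac {p q : ℕ} {A : Type*} [Ring A] [Algebra ℝ A] {γ : Fin (p + q) → A}
    (hγ : ∀ a b, γ a * γ b + γ b * γ a = algebraMap ℝ A (2 * eta p q a b)) :
    ∀ i j, i ≠ j → γ i * γ j = -(γ j * γ i) := by
  intro i j hij
  have := hγ i j
  rw [eta, if_neg hij, mul_zero, map_zero] at this
  exact eq_neg_of_add_eq_zero_left this

lemma rel_sq' {p q : ℕ} {A : Type*} [Ring A] [Algebra ℝ A] {γ : Fin (p + q) → A}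
    (hγ : ∀ a b, γ a * γ b + γ b * γ a = algebraMap ℝ A (2 * eta p q a b)) (i) :
    γ i * γ i = algebraMap ℝ A (if (i : ℕ) < p then 1 else -1) := by
  have := hγ i i
  rw [eta, if_pos rfl, map_mul, ← two_mul, map_ofNat] at this
  have h2 : (2 : ℝ) • (γ i * γ i) =
    (2 : ℝ) • algebraMap ℝ A (if (i : ℕ) < p then 1 else -1) := by
    rw [two_smul, two_smul, ← two_mul, ← two_mul]; exact this
  exact smul_right_injective A (two_ne_zero : (2 : ℝ) ≠ 0) h2

lemma rel_sq {p q : ℕ} {A : Type*} [Ring A] [Algebra ℝ A] {γ : Fin (p + q) → A}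
    (hγ : ∀ a b, γ a * γ b + γ b * γ a = algebraMap ℝ A (2 * eta p q a b)) (i) :
    γ i * γ i = 1 ∨ γ i * γ i = -1 := by
  rw [rel_sq' hγ i]
  split_ifs <;> simp

lemma gen_span (p q : ℕ) (x : CliffordAlgebra (Qpq p q)) :
    x ∈ Submodule.span ℝ (Set.range fun l : List (Fin (p + q)) => (l.map (gen p q)).prod) := by
  induction x using CliffordAlgebra.left_induction with
  | algebraMap r =>
    rw [Algebra.algebraMap_eq_smul_one]
    exact Submodule.smul_mem _ _ (Submodule.subset_span ⟨[], by simp⟩)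
  | add x y hx hy => exact Submodule.add_mem _ hx hy
  | ι_mul x m hx =>
    rw [gen_decomp, Finset.sum_mul]
    refine Submodule.sum_mem _ fun i _ => ?_
    rw [smul_mul_assoc]
    refine Submodule.smul_mem _ _ ?_
    have := Submodule.mem_map_of_mem (f := LinearMap.mulLeft ℝ (gen p q i)) hx
    rw [Submodule.map_span] at this
    refine Submodule.span_mono ?_ this
    rintro _ ⟨_, ⟨l, rfl⟩, rfl⟩
    exact ⟨i :: l, by simp⟩

lemma rel_hom {p q : ℕ} {A : Type*} [Ring A] [Algebra ℝ A] {γ : Fin (p + q) → A}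
    (hγ : ∀ a b, γ a * γ b + γ b * γ a = algebraMap ℝ A (2 * eta p q a b)) :
    ∃ φ : CliffordAlgebra (Qpq p q) →ₐ[ℝ] A, ∀ i, φ (gen p q i) = γ i := by
  refine ⟨CliffordAlgebra.lift _ ⟨Fintype.linearCombination ℝ γ, ?_⟩, ?_⟩
  · intro m
    have h2 : (2 : ℝ) • (Fintype.linearCombination ℝ γ m * Fintype.linearCombination ℝ γ m) =
        (2 : ℝ) • algebraMap ℝ A (Qpq p q m) := by
      simp only [Fintype.linearCombination_apply]
      rw [two_smul, Finset.sum_mul_sum]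
      nth_rewrite 2 [Finset.sum_comm]
      rw [← Finset.sum_add_distrib]
      simp only [← Finset.sum_add_distrib]
      have : ∀ i j, m i • γ i * m j • γ j + m j • γ j * m i • γ i =
          algebraMap ℝ A (m i * m j * (2 * eta p q i j)) := by
        intro i j
        rw [smul_mul_smul_comm, smul_mul_smul_comm, mul_comm (m j), ← smul_add, hγ, Algebra.smul_def,
          ← map_mul]
      simp only [this, ← map_sum]
      rw [Algebra.smul_def, ← map_mul]
      congr 1
      simp only [Qpq, QuadraticMap.weightedSumSquares_apply, Finset.mul_sum]
      refine Finset.sum_congr rfl fun i _ => ?_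
      rw [Finset.sum_eq_single i]
      · simp only [eta, if_true, smul_eq_mul]; ring
      · intro j _ hj; simp [eta, Ne.symm hj]
      · simp
    exact smul_right_injective A (two_ne_zero : (2 : ℝ) ≠ 0) h2
  · intro i
    rw [gen, lift_ι_apply]
    simp [Fintype.linearCombination_apply_single]

/-- Odd generators satisfying the Clifford relations in even dimension have
ordered product equal to ± the volume element. -/
theorem stmt_10 (p q : ℕ) (hn : Even (p + q))
    (γ : Fin (p + q) → CliffordAlgebra (Qpq p q))
    (hodd : ∀ a, γ a ∈ evenOdd (Qpq p q) 1)
    (hγ : ∀ a b, γ a * γ b + γ b * γ a =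
      algebraMap ℝ (CliffordAlgebra (Qpq p q)) (2 * eta p q a b)) :
    ((List.finRange (p + q)).map γ).prod = vol p q ∨
      ((List.finRange (p + q)).map γ).prod = -vol p q := by
  have hac := rel_ac (gen_rel p q)
  have hsq := rel_sq (gen_rel p q)
  obtain ⟨φ, hφ⟩ := rel_hom hγ
  have hinj : Function.Injective φ := aux_inj hn _ hac hsq (gen_span p q) φ
  have : Module.Finite ℝ (ExteriorAlgebra ℝ (Fin (p + q) → ℝ)) :=
    Module.Finite.of_basis (Pi.basisFun ℝ (Fin (p + q))).ExteriorAlgebra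
  have : Module.Finite ℝ (CliffordAlgebra (Qpq p q)) :=
    Module.Finite.equiv (equivExterior (Qpq p q)).symm
  have hsurj : Function.Surjective φ :=
    (LinearMap.injective_iff_surjective (f := φ.toLinearMap)).1 hinj
  have hw' : ((List.finRange (p + q)).map γ).prod = φ (vol p q) := by
    rw [vol, map_list_prod, List.map_map]
    congr 2
    funext i
    exact (hφ i).symm
  rw [hw']
  have hαφ : ∀ x, φ (involute x) = involute (φ x) := by
    intro x
    have : φ.comp involute = (involute (Q := Qpq p q)).comp φ := by
      apply CliffordAlgebra.hom_ext
      ext i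
      have h1 : φ (involute (gen p q i)) = involute (φ (gen p q i)) := by
        rw [hφ, involute_eq_of_mem_odd (hodd i), gen, involute_ι, map_neg, ← gen, hφ]
      simpa [gen] using h1
    exact DFunLike.congr_fun this x
  -- the volume element twists by the grade involution
  have hvol : ∀ x, vol p q * x = involute x * vol p q := by
    intro x
    induction x using CliffordAlgebra.left_induction with
    | algebraMap r => rw [AlgHom.commutes, Algebra.commutes]
    | add x y hx hy => rw [mul_add, map_add, add_mul, hx, hy]
    | ι_mul x m hx =>
      have h1 : vol p q * ι (Qpq p q) m = -(ι (Qpq p q) m * vol p q) := by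
        rw [gen_decomp, Finset.mul_sum, Finset.sum_mul, ← Finset.sum_neg_distrib]
        refine Finset.sum_congr rfl fun i _ => ?_
        have := aux_vol hn _ hac i
        rw [mul_smul_comm, smul_mul_assoc, vol, this, smul_neg, neg_neg]
      rw [map_mul, involute_ι, ← mul_assoc, h1, neg_mul, mul_assoc, hx]
      noncomm_ring
  have hvol' : ∀ y, φ (vol p q) * y = involute y * φ (vol p q) := by
    intro y
    obtain ⟨x, rfl⟩ := hsurj y
    rw [← map_mul, hvol, map_mul, hαφ]
  obtain ⟨r, hr⟩ := aux_center hn _ hac hsq (gen_span p q) (vol p q * φ (vol p q)) (by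
    intro j
    rw [mul_assoc, hvol', ← mul_assoc (vol p q), hvol (involute _), involute_involute, mul_assoc])
  have hs := aux_vol_sq _ hac hsq
  rw [← vol] at hs
  obtain ⟨s, hs1, hs⟩ : ∃ s : ℝ, s * s = 1 ∧ vol p q * vol p q = s • 1 := by
    rcases hs with h | h
    · exact ⟨1, by norm_num, by simp [h]⟩
    · exact ⟨-1, by norm_num, by simp [h]⟩
  have hlam : φ (vol p q) = (s * r) • vol p q := by
    have h1 : vol p q * (vol p q * φ (vol p q)) = r • vol p q := by rw [hr]; simp
    rw [← mul_assoc, hs, smul_mul_assoc, one_mul] at h1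
    rw [mul_smul, ← h1, smul_smul, hs1, one_smul]
  have hsq2 : φ (vol p q) * φ (vol p q) = s • 1 := by
    rw [← map_mul, hs, map_smul, map_one]
  rw [hlam, smul_mul_smul_comm, hs, smul_smul] at hsq2
  have h3 : (s * r) * (s * r) * s = s := smul_left_injective ℝ (one_ne_zero) hsq2
  have h4 : (s * r) * (s * r) = 1 := by
    have hs0 : s ≠ 0 := by rintro rfl; simp at hs1
    exact mul_right_cancel₀ hs0 (by rw [h3, one_mul])
  rcases mul_self_eq_one_iff.1 h4 with h | h
  · left; rw [hlam, h, one_smul]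
  · right; rw [hlam, h, neg_one_smul]
end

section
/- Let γ¹, ..., γⁿ be odd elements of the Clifford algebra Cl(p,q) of odd dimension n satisfying γᵃγᵇ + γᵇγᵃ = 2ηᵃᵇ. Then γ¹γ²⋯γⁿ = ± e¹e²⋯eⁿ. -/
open CliffordAlgebra

section aux
variable (p q : ℕ)

lemma eta_ne (a : Fin (p + q)) : eta p q a a ≠ 0 := by
  rw [eta, if_pos rfl]; split_ifs <;> norm_num

lemma Qpq_apply (m : Fin (p + q) → ℝ) : Qpq p q m = ∑ a, eta p q a a * (m a * m a) := by
  simp [Qpq, QuadraticMap.weightedSumSquares_apply, eta]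

lemma gen_sq (a : Fin (p + q)) :
    gen p q a * gen p q a = algebraMap ℝ _ (eta p q a a) := by
  rw [gen, ι_sq_scalar, Qpq_apply]
  congr 1
  rw [Finset.sum_eq_single a] <;> simp +contextual [Pi.single_apply]

lemma gen_anti (a b : Fin (p + q)) (h : a ≠ b) :
    gen p q a * gen p q b = - (gen p q b * gen p q a) := by
  rw [eq_neg_iff_add_eq_zero, gen, gen, ι_mul_ι_add_swap]
  have : QuadraticMap.polar (Qpq p q) (Pi.single a 1) (Pi.single b 1) = 0 := by
    simp only [QuadraticMap.polar, Qpq_apply, ← Finset.sum_sub_distrib]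
    apply Finset.sum_eq_zero
    intro i _
    by_cases h1 : i = a
    · subst h1; simp [Pi.single_apply, h]
    · simp [Pi.single_apply, h1]
  rw [this, map_zero]

lemma invol_gen (a : Fin (p + q)) : involute (gen p q a) = - gen p q a := by
  simp [gen]

noncomputable def BB (s : Finset (Fin (p + q))) : Subalgebra ℝ (CliffordAlgebra (Qpq p q)) :=
  Algebra.adjoin ℝ (gen p q '' s)

lemma gen_mem_BB {s : Finset (Fin (p + q))} {a} (h : a ∈ s) : gen p q a ∈ BB p q s :=
  Algebra.subset_adjoin ⟨a, h, rfl⟩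

lemma invol_BB (s : Finset (Fin (p + q))) (x) (hx : x ∈ BB p q s) : involute x ∈ BB p q s := by
  induction hx using Algebra.adjoin_induction with
  | mem x hx =>
    obtain ⟨a, ha, rfl⟩ := hx
    rw [invol_gen]
    exact neg_mem (gen_mem_BB p q ha)
  | algebraMap r => rw [AlgHom.commutes]; exact Subalgebra.algebraMap_mem _ _
  | add x y _ _ hx hy => rw [map_add]; exact add_mem hx hy
  | mul x y _ _ hx hy => rw [map_mul]; exact mul_mem hx hy

lemma BB_comm (s : Finset (Fin (p + q))) (a) (ha : a ∉ s) (x) (hx : x ∈ BB p q s) :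
    x * gen p q a = gen p q a * involute x := by
  induction hx using Algebra.adjoin_induction with
  | mem x hx =>
    obtain ⟨b, hb, rfl⟩ := hx
    rw [invol_gen, gen_anti p q b a (by rintro rfl; exact ha hb), mul_neg]
  | algebraMap r => rw [AlgHom.commutes]; exact Algebra.commutes _ _
  | add x y _ _ hx hy => rw [map_add, add_mul, mul_add, hx, hy]
  | mul x y _ _ hx hy => rw [map_mul, mul_assoc, hy, ← mul_assoc, hx, mul_assoc]

lemma BB_decomp (s : Finset (Fin (p + q))) (a) (ha : a ∉ s) (x) (hx : x ∈ BB p q (insert a s)) :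
    ∃ u ∈ BB p q s, ∃ v ∈ BB p q s, x = u + gen p q a * v := by
  induction hx using Algebra.adjoin_induction with
  | mem x hx =>
    obtain ⟨b, hb, rfl⟩ := hx
    rcases Finset.mem_insert.1 (Finset.mem_coe.1 hb) with rfl | hb
    · exact ⟨0, zero_mem _, 1, one_mem _, by simp⟩
    · exact ⟨_, gen_mem_BB p q hb, 0, zero_mem _, by simp⟩
  | algebraMap r => exact ⟨_, Subalgebra.algebraMap_mem _ r, 0, zero_mem _, by simp⟩
  | add x y _ _ hx hy =>
    obtain ⟨u, hu, v, hv, rfl⟩ := hx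
    obtain ⟨u', hu', v', hv', rfl⟩ := hy
    exact ⟨_, add_mem hu hu', _, add_mem hv hv', by rw [mul_add]; abel⟩
  | mul x y _ _ hx hy =>
    obtain ⟨u, hu, v, hv, rfl⟩ := hx
    obtain ⟨u', hu', v', hv', rfl⟩ := hy
    refine ⟨u * u' + algebraMap ℝ _ (eta p q a a) * (involute v * v'),
      add_mem (mul_mem hu hu') (mul_mem (Subalgebra.algebraMap_mem _ _)
        (mul_mem (invol_BB p q s v hv) hv')),
      involute u * v' + v * u',
      add_mem (mul_mem (invol_BB p q s u hu) hv') (mul_mem hv hu'), ?_⟩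
    have h1 : u * (gen p q a * v') = gen p q a * (involute u * v') := by
      rw [← mul_assoc, BB_comm p q s a ha u hu, mul_assoc]
    have h2 : gen p q a * v * (gen p q a * v') =
        algebraMap ℝ _ (eta p q a a) * (involute v * v') := by
      rw [← gen_sq, mul_assoc, ← mul_assoc v, BB_comm p q s a ha v hv]
      simp only [mul_assoc]
    rw [add_mul, mul_add, mul_add, h1, h2, mul_add, mul_assoc (gen p q a) v u']
    abel

/-- twisted conjugation -/
lemma twist (s : Finset (Fin (p + q))) (a) (ha : a ∉ s) (u v)
    (hu : u ∈ BB p q s) (hv : v ∈ BB p q s) :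
    gen p q a * involute (u + gen p q a * v) * gen p q a =
      eta p q a a • (u - gen p q a * v) := by
  have h : ∀ w ∈ BB p q s, involute w * gen p q a = gen p q a * w := by
    intro w hw
    rw [BB_comm p q s a ha _ (invol_BB p q s w hw), involute_involute]
  rw [map_add, map_mul, invol_gen, mul_assoc, add_mul, mul_assoc, h u hu, h v hv, mul_add,
    ← mul_assoc, neg_mul, mul_neg, ← mul_assoc (gen p q a) (gen p q a), gen_sq,
    smul_sub, Algebra.smul_def,
    Algebra.smul_def, sub_eq_add_neg]

lemma BB_top : BB p q Finset.univ = ⊤ := by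
  rw [eq_top_iff, ← adjoin_range_ι, BB, Algebra.adjoin_le_iff]
  rintro _ ⟨m, rfl⟩
  rw [pi_eq_sum_univ' m, map_sum]
  refine sum_mem fun i _ => ?_
  rw [map_smul]
  exact Subalgebra.smul_mem _ (gen_mem_BB p q (Finset.mem_univ i)) _

lemma fixed_scalar (x) (hx : ∀ a, gen p q a * involute x * gen p q a = eta p q a a • x) :
    ∃ c : ℝ, x = algebraMap ℝ _ c := by
  have key : ∀ s : Finset (Fin (p + q)), x ∈ BB p q s → ∃ c : ℝ, x = algebraMap ℝ _ c := by
    intro s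
    induction s using Finset.induction_on with
    | empty =>
      intro h
      simp only [BB, Finset.coe_empty, Set.image_empty, Algebra.adjoin_empty] at h
      obtain ⟨c, hc⟩ := Algebra.mem_bot.1 h
      exact ⟨c, hc.symm⟩
    | insert a s ha ih =>
      intro h
      obtain ⟨u, hu, v, hv, rfl⟩ := BB_decomp p q s a ha x h
      have h1 := hx a
      rw [twist p q s a ha u v hu hv] at h1
      have h2 := smul_right_injective _ (eta_ne p q a) h1
      have h3 : gen p q a * v = 0 := by
        have : (2 : ℝ) • (gen p q a * v) = 0 := by
          rw [two_smul]
          have := congrArg (fun z => z - u + gen p q a * v) h2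
          rw [eq_comm]; convert this using 1 <;> abel
        exact (smul_eq_zero.1 this).resolve_left two_ne_zero
      rw [h3, add_zero] at ih ⊢
      exact ih hu
  exact key _ (by rw [BB_top]; trivial)

lemma finite_cl : Module.Finite ℝ (CliffordAlgebra (Qpq p q)) := by
  have key : ∀ s : Finset (Fin (p + q)), (BB p q s).toSubmodule.FG := by
    intro s
    induction s using Finset.induction_on with
    | empty =>
      simp only [BB, Finset.coe_empty, Set.image_empty, Algebra.adjoin_empty]
      rw [Algebra.toSubmodule_bot, Submodule.one_eq_span]
      exact Submodule.fg_span_singleton _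
    | insert a s ha ih =>
      have h2 := ih.sup (ih.map (LinearMap.mulLeft ℝ (gen p q a)))
      refine (Submodule.FG.of_le h2 ?_)
      intro x hx
      obtain ⟨u, hu, v, hv, rfl⟩ := BB_decomp p q s a ha x hx
      exact Submodule.add_mem_sup hu ⟨v, hv, rfl⟩
  have := key Finset.univ
  rw [BB_top, Algebra.top_toSubmodule] at this
  exact ⟨this⟩

lemma graded_inj (φ : CliffordAlgebra (Qpq p q) →ₐ[ℝ] CliffordAlgebra (Qpq p q))
    (hφ : ∀ x, φ (involute x) = involute (φ x)) : Function.Injective φ := by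
  have key : ∀ s : Finset (Fin (p + q)), ∀ x ∈ BB p q s, φ x = 0 → x = 0 := by
    intro s
    induction s using Finset.induction_on with
    | empty =>
      intro x h h0
      simp only [BB, Finset.coe_empty, Set.image_empty, Algebra.adjoin_empty] at h
      obtain ⟨c, rfl⟩ := Algebra.mem_bot.1 h
      simpa using h0
    | insert a s ha ih =>
      intro x h h0
      obtain ⟨u, hu, v, hv, rfl⟩ := BB_decomp p q s a ha x h
      have h1 := congrArg φ (twist p q s a ha u v hu hv)
      rw [map_mul, map_mul, hφ, h0, map_zero, mul_zero, zero_mul, map_smul, eq_comm] at h1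
      have h2 := (smul_eq_zero.1 h1).resolve_left (eta_ne p q a)
      rw [map_sub, sub_eq_zero] at h2
      rw [map_add, ← h2, ← two_smul ℝ] at h0
      have h3 := (smul_eq_zero.1 h0).resolve_left two_ne_zero
      rw [h3] at h2
      have h4 : φ v = 0 := by
        have h5 : φ (gen p q a * (gen p q a * v)) = 0 := by rw [map_mul, ← h2, mul_zero]
        rw [← mul_assoc, gen_sq, ← Algebra.smul_def, map_smul] at h5
        exact (smul_eq_zero.1 h5).resolve_left (eta_ne p q a)
      rw [ih u hu h3, ih v hv h4]; simp
  rw [injective_iff_map_eq_zero]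
  exact fun x => key Finset.univ x (by rw [BB_top]; trivial)

lemma gen_prod (L : List (Fin (p + q))) (a) :
    gen p q a * (L.map (gen p q)).prod =
      (-1 : ℝ) ^ (L.length + L.count a) • ((L.map (gen p q)).prod * gen p q a) := by
  induction L with
  | nil => simp
  | cons b L ih =>
    by_cases h : b = a
    · subst h
      simp only [List.map_cons, List.prod_cons, List.length_cons, List.count_cons_self]
      rw [ih, mul_smul_comm, smul_mul_assoc, smul_smul, ← mul_assoc, ih, smul_mul_assoc, smul_smul]
      congr 1
      rw [show L.length + 1 + (List.count b L + 1) = L.length + List.count b L + 2 by ring, pow_add]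
      ring
    · simp only [List.map_cons, List.prod_cons, List.length_cons, List.count_cons_of_ne h]
      rw [← mul_assoc, gen_anti p q a b (Ne.symm h), neg_mul, mul_assoc, ih, mul_smul_comm,
        ← mul_assoc, ← neg_smul]
      congr 1
      ring

lemma invol_prod (L : List (Fin (p + q))) :
    involute (L.map (gen p q)).prod = (-1 : ℝ) ^ L.length • (L.map (gen p q)).prod := by
  induction L with
  | nil => simp
  | cons b L ih =>
    simp only [List.map_cons, List.prod_cons, List.length_cons, map_mul, ih, invol_gen]
    rw [mul_smul_comm, neg_mul, pow_succ, mul_neg_one, neg_smul, smul_neg]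

lemma unit_prod (L : List (Fin (p + q))) : IsUnit (L.map (gen p q)).prod := by
  induction L with
  | nil => simp
  | cons b L ih =>
    simp only [List.map_cons, List.prod_cons]
    refine IsUnit.mul ?_ ih
    refine ((Commute.refl (gen p q b)).isUnit_mul_iff.1 ?_).1
    rw [gen_sq]
    exact (IsUnit.mk0 _ (eta_ne p q b)).map (algebraMap ℝ _)

lemma vol_comm_gen (hn : Odd (p + q)) (a) : gen p q a * vol p q = vol p q * gen p q a := by
  rw [vol, gen_prod, List.count_eq_one_of_mem (List.nodup_finRange _) (List.mem_finRange a),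
    List.length_finRange, (hn.add_one).neg_one_pow, one_smul]

lemma vol_central (hn : Odd (p + q)) (x) : x * vol p q = vol p q * x := by
  have hx : x ∈ BB p q Finset.univ := by rw [BB_top]; trivial
  induction hx using Algebra.adjoin_induction with
  | mem x hx =>
    obtain ⟨b, hb, rfl⟩ := hx
    exact vol_comm_gen p q hn b
  | algebraMap r => exact Algebra.commutes _ _
  | add x y _ _ hx hy => rw [add_mul, mul_add, hx, hy]
  | mul x y _ _ hx hy => rw [mul_assoc, hy, ← mul_assoc, hx, mul_assoc]

lemma invol_vol (hn : Odd (p + q)) : involute (vol p q) = - vol p q := by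
  rw [vol, invol_prod, List.length_finRange, hn.neg_one_pow, neg_one_smul]

lemma even_central (x : CliffordAlgebra (Qpq p q)) (h1 : involute x = x) (h2 : ∀ y, y * x = x * y) :
    ∃ c : ℝ, x = algebraMap ℝ _ c := by
  apply fixed_scalar
  intro a
  rw [h1, h2, mul_assoc, gen_sq, Algebra.smul_def, h2]

end aux

/-- Odd generators satisfying the Clifford relations in odd dimension have
ordered product equal to ± the volume element. -/
theorem stmt_11 (p q : ℕ) (hn : Odd (p + q))
    (γ : Fin (p + q) → CliffordAlgebra (Qpq p q))
    (hodd : ∀ a, γ a ∈ evenOdd (Qpq p q) 1)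
    (hγ : ∀ a b, γ a * γ b + γ b * γ a =
      algebraMap ℝ (CliffordAlgebra (Qpq p q)) (2 * eta p q a b)) :
    ((List.finRange (p + q)).map γ).prod = vol p q ∨
      ((List.finRange (p + q)).map γ).prod = -vol p q := by
  let f : (Fin (p + q) → ℝ) →ₗ[ℝ] CliffordAlgebra (Qpq p q) := Fintype.linearCombination ℝ γ
  have hf0 : ∀ m, f m = ∑ a, m a • γ a := fun m => Fintype.linearCombination_apply ℝ γ m
  have hf : ∀ m, f m * f m = algebraMap ℝ _ (Qpq p q m) := by
    intro m
    have e1 : f m * f m = ∑ a, ∑ b, (m a * m b) • (γ a * γ b) := by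
      rw [hf0, Finset.sum_mul_sum]
      simp only [smul_mul_smul_comm]
    have e2 : f m * f m = ∑ a, ∑ b, (m a * m b) • (γ b * γ a) := by
      rw [e1, Finset.sum_comm]
      simp only [mul_comm]
    have e3 : (2 : ℝ) • (f m * f m) = (2 : ℝ) • algebraMap ℝ _ (Qpq p q m) := by
      rw [two_smul]
      nth_rewrite 1 [e1]
      rw [e2]
      simp only [← Finset.sum_add_distrib, ← smul_add, hγ]
      simp only [Algebra.algebraMap_eq_smul_one, smul_smul, ← Finset.sum_smul]
      congr 1
      rw [Qpq_apply, Finset.mul_sum]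
      refine Finset.sum_congr rfl fun a _ => ?_
      rw [Finset.sum_eq_single a]
      · ring
      · intro b _ hb; simp [eta, hb.symm]
      · simp
    exact smul_right_injective _ (two_ne_zero (α := ℝ)) e3
  let φ := CliffordAlgebra.lift (Qpq p q) ⟨f, hf⟩
  have hφι : ∀ m, φ (ι _ m) = f m := fun m => lift_ι_apply _ _ _ 
  have hφg : ∀ a, φ (gen p q a) = γ a := by
    intro a
    rw [gen, hφι]; simp [f]
  have hφi : ∀ x, φ (involute x) = involute (φ x) := by
    have : φ.comp involute = (involute (Q := Qpq p q)).comp φ := by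
      apply CliffordAlgebra.hom_ext
      refine LinearMap.ext fun m => ?_
      have : involute (f m) = - f m := by
        apply involute_eq_of_mem_odd
        rw [hf0]
        exact sum_mem fun a _ => Submodule.smul_mem _ _ (hodd a)
      simp [hφι, this]
    exact fun x => DFunLike.congr_fun this x
  have hinj := graded_inj p q φ hφi
  have := finite_cl p q
  have hsurj : Function.Surjective φ :=
    (LinearMap.injective_iff_surjective (f := φ.toLinearMap)).1 hinj
  have hG : ((List.finRange (p + q)).map γ).prod = φ (vol p q) := by
    rw [vol, map_list_prod, List.map_map]
    congr 2
    funext a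
    exact (hφg a).symm
  rw [hG]
  have hGc : ∀ x, x * φ (vol p q) = φ (vol p q) * x := by
    intro x
    obtain ⟨y, rfl⟩ := hsurj x
    rw [← map_mul, vol_central p q hn, map_mul]
  have hGi : involute (φ (vol p q)) = - φ (vol p q) := by
    rw [← hφi, invol_vol p q hn, map_neg]
  obtain ⟨s, hs⟩ := even_central p q (vol p q * vol p q)
    (by rw [map_mul, invol_vol p q hn, neg_mul_neg])
    (fun y => by rw [← mul_assoc, vol_central p q hn, mul_assoc, vol_central p q hn])
  obtain ⟨c, hc⟩ := even_central p q (φ (vol p q) * vol p q)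
    (by rw [map_mul, invol_vol p q hn, hGi, neg_mul_neg])
    (fun y => by rw [← mul_assoc, hGc, mul_assoc, vol_central p q hn, mul_assoc])
  have hs0 : s ≠ 0 := by
    rintro rfl
    rw [map_zero] at hs
    have := (unit_prod p q (List.finRange (p + q)))
    change IsUnit (vol p q) at this
    have h2 := this.mul this
    rw [hs] at h2
    exact not_isUnit_zero h2
  have h1 : s • φ (vol p q) = c • vol p q := by
    rw [Algebra.smul_def, Algebra.smul_def, ← hs, ← hc, hGc, mul_assoc]
  have h2 : φ (vol p q) = (c / s) • vol p q := by
    rw [div_eq_inv_mul, mul_smul, ← h1, smul_smul, inv_mul_cancel₀ hs0, one_smul]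
  have h3 : φ (vol p q) * φ (vol p q) = algebraMap ℝ _ s := by
    rw [← map_mul, hs, AlgHom.commutes]
  rw [h2, smul_mul_smul_comm, hs, Algebra.smul_def, ← map_mul] at h3
  have h4 := (algebraMap ℝ (CliffordAlgebra (Qpq p q))).injective h3
  have h5 : c / s * (c / s) = 1 := mul_right_cancel₀ hs0 (by rw [h4, one_mul])
  rw [h2]
  rcases mul_self_eq_one_iff.1 h5 with h | h <;> rw [h]
  · left; simp
  · right; simp
end
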